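/- There exists a constant C > 0 (independent of n) such that for every n ≥ 4, sup_{x ∈ ℝ} | P( (R_n − E[R_n]) / sqrt(Var(R_n)) ≤ x ) − Φ(x) | ≤ C / n^{1/3}, where R_n is the number of descents of a uniformly random derangement of the symmetric group S_n and Φ is the cumulative distribution function of the standard normal distribution. -/

import Mathlib

open Finset

/-- The number of descents of a permutation of `Fin n`:
positions `i` with `i+1 < n` and `π(i) > π(i+1)`. -/
def descents {n : ℕ} (π : Equiv.Perm (Fin n)) : ℕ :=
  (Finset.univ.filter fun i : Fin n =>
    ∃ h : (i : ℕ) + 1 < n, π ⟨(i : ℕ) + 1, h⟩ < π i).card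

/-- The derangements of the symmetric group `S_n`. -/
def derangementSet (n : ℕ) : Finset (Equiv.Perm (Fin n)) :=
  Finset.univ.filter fun π => ∀ i, π i ≠ i

/-- The standard normal cumulative distribution function. -/
noncomputable def stdNormalCDF (x : ℝ) : ℝ :=
  (Real.sqrt (2 * Real.pi))⁻¹ * ∫ t in Set.Iic x, Real.exp (-(t ^ 2) / 2)

/-- Mean number of descents of a uniformly random derangement of `S_n`. -/
noncomputable def derMean (n : ℕ) : ℝ :=
  (∑ π ∈ derangementSet n, (descents π : ℝ)) / (derangementSet n).card

/-- Variance of the number of descents of a uniformly random derangement of `S_n`. -/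
noncomputable def derVar (n : ℕ) : ℝ :=
  (∑ π ∈ derangementSet n, ((descents π : ℝ) - derMean n) ^ 2) / (derangementSet n).card

/-- `P((R_n - E R_n)/sqrt(Var R_n) ≤ x)` under the uniform measure on derangements. -/
noncomputable def derCDF (n : ℕ) (x : ℝ) : ℝ :=
  (((derangementSet n).filter fun π =>
      ((descents π : ℝ) - derMean n) / Real.sqrt (derVar n) ≤ x).card : ℝ) /
    (derangementSet n).card

/-! Gaussian facts -/
noncomputable def gI (t : ℝ) : ℝ := Real.exp (-(t ^ 2) / 2)

lemma gI_eq : gI = fun t : ℝ => Real.exp (-(1/2) * t ^ 2) := by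
  funext t; unfold gI; congr 1; ring

lemma gI_cont : Continuous gI := by unfold gI; fun_prop

lemma gI_pos (t : ℝ) : 0 < gI t := Real.exp_pos _

lemma gI_le_one (t : ℝ) : gI t ≤ 1 := by
  unfold gI; rw [Real.exp_le_one_iff]; nlinarith [sq_nonneg t]

lemma gI_int : MeasureTheory.Integrable gI := by
  rw [gI_eq]; exact integrable_exp_neg_mul_sq (by norm_num)

lemma gI_total : ∫ t, gI t = Real.sqrt (2 * Real.pi) := by
  rw [gI_eq, integral_gaussian]; congr 1; field_simp

lemma s2pi_pos : 0 < Real.sqrt (2 * Real.pi) := Real.sqrt_pos.mpr (by positivity)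

lemma s2pi_ge_one : 1 ≤ Real.sqrt (2 * Real.pi) := by
  rw [Real.one_le_sqrt]; nlinarith [Real.pi_gt_three]

lemma s2pi_le : Real.sqrt (2 * Real.pi) ≤ 3 := by
  rw [Real.sqrt_le_left (by norm_num)]; nlinarith [Real.pi_lt_four]

lemma s2pi_inv_le_one : (Real.sqrt (2 * Real.pi))⁻¹ ≤ 1 := inv_le_one_of_one_le₀ s2pi_ge_one

lemma Phi_def (x : ℝ) : stdNormalCDF x = (Real.sqrt (2 * Real.pi))⁻¹ * ∫ t in Set.Iic x, gI t := rfl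

lemma Phi_compl (x : ℝ) :
    1 - stdNormalCDF x = (Real.sqrt (2 * Real.pi))⁻¹ * ∫ t in Set.Ioi x, gI t := by
  have h := MeasureTheory.integral_add_compl (μ := MeasureTheory.volume) (measurableSet_Iic (a := x)) gI_int
  rw [Set.compl_Iic, gI_total] at h
  rw [Phi_def]
  have := s2pi_pos
  field_simp
  linarith

lemma Phi_nonneg (x : ℝ) : 0 ≤ stdNormalCDF x := by
  rw [Phi_def]
  exact mul_nonneg (inv_nonneg.mpr s2pi_pos.le)
    (MeasureTheory.integral_nonneg fun t => (gI_pos t).le)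

lemma Phi_le_one (x : ℝ) : stdNormalCDF x ≤ 1 := by
  have : 0 ≤ 1 - stdNormalCDF x := by
    rw [Phi_compl]
    exact mul_nonneg (inv_nonneg.mpr s2pi_pos.le)
      (MeasureTheory.integral_nonneg fun t => (gI_pos t).le)
  linarith

lemma Phi_deriv (x : ℝ) : HasDerivAt stdNormalCDF ((Real.sqrt (2 * Real.pi))⁻¹ * gI x) x := by
  have h1 : stdNormalCDF = fun y => (Real.sqrt (2 * Real.pi))⁻¹ *
      ((∫ t in Set.Iic 0, gI t) + ∫ t in (0:ℝ)..y, gI t) := by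
    funext y
    rw [Phi_def, ← intervalIntegral.integral_Iic_sub_Iic gI_int.integrableOn gI_int.integrableOn]
    ring
  rw [h1]
  have h2 : HasDerivAt (fun y => ∫ t in (0:ℝ)..y, gI t) (gI x) x :=
    intervalIntegral.integral_hasDerivAt_right (gI_cont.intervalIntegrable _ _)
      gI_cont.stronglyMeasurable.stronglyMeasurableAtFilter gI_cont.continuousAt
  exact (h2.const_add _).const_mul _

lemma Phi_mono : Monotone stdNormalCDF :=
  monotone_of_deriv_nonneg (fun x => (Phi_deriv x).differentiableAt) (fun x => by
    rw [(Phi_deriv x).deriv]; exact mul_nonneg (inv_nonneg.mpr s2pi_pos.le) (gI_pos x).le)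

lemma Phi_cont : Continuous stdNormalCDF :=
  continuous_iff_continuousAt.mpr fun x => (Phi_deriv x).continuousAt

lemma Phi_lip (x y : ℝ) : |stdNormalCDF x - stdNormalCDF y| ≤ |x - y| := by
  have := Convex.norm_image_sub_le_of_norm_hasDerivWithin_le (f := stdNormalCDF)
    (f' := fun x => (Real.sqrt (2 * Real.pi))⁻¹ * gI x) (s := Set.univ) (C := 1)
    (fun x _ => (Phi_deriv x).hasDerivWithinAt) (fun x _ => by
      rw [Real.norm_eq_abs, abs_of_nonneg (mul_nonneg (inv_nonneg.mpr s2pi_pos.le) (gI_pos x).le)]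
      exact mul_le_one₀ s2pi_inv_le_one (gI_pos x).le (gI_le_one x)) convex_univ
      (Set.mem_univ y) (Set.mem_univ x)
  simpa using this

lemma Phi_neg (x : ℝ) : stdNormalCDF (-x) = 1 - stdNormalCDF x := by
  rw [Phi_compl, Phi_def]
  congr 1
  have := integral_comp_neg_Iic (-x) gI
  rw [neg_neg] at this
  rw [← this]
  congr 1
  funext t
  unfold gI; simp

lemma gI_deriv (x : ℝ) : HasDerivAt gI (-x * gI x) x := by
  have : HasDerivAt (fun t : ℝ => -(t ^ 2) / 2) (-x) x := by
    exact (((hasDerivAt_pow 2 x).neg).div_const 2).congr_deriv (by norm_num; try ring)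
  have := this.exp
  rw [mul_comm]
  exact this

lemma gI_inv_deriv (x : ℝ) : HasDerivAt (fun t => Real.exp (t ^ 2 / 2)) (x * Real.exp (x ^ 2 / 2)) x := by
  have : HasDerivAt (fun t : ℝ => (t ^ 2) / 2) (x) x := by
    exact (((hasDerivAt_pow 2 x)).div_const 2).congr_deriv (by norm_num)
  have := this.exp
  rw [mul_comm]
  exact this

lemma exp_gI (x : ℝ) : Real.exp (x ^ 2 / 2) * gI x = 1 := by
  unfold gI; rw [← Real.exp_add]; simp; ring

lemma gI_tendsto : Filter.Tendsto gI Filter.atTop (nhds 0) := by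
  unfold gI
  refine Real.tendsto_exp_atBot.comp ?_
  have : (fun t : ℝ => -(t ^ 2) / 2) = fun t : ℝ => -(t ^ 2 / 2) := by funext t; ring
  rw [this, Filter.tendsto_neg_atBot_iff]
  exact (Filter.tendsto_pow_atTop (by norm_num)).atTop_div_const (by norm_num)

lemma tail_int (w : ℝ) (hw : 0 ≤ w) : MeasureTheory.IntegrableOn (fun t => t * gI t) (Set.Ioi w) ∧
    ∫ t in Set.Ioi w, t * gI t = gI w := by
  have hd : ∀ x ∈ Set.Ici w, HasDerivAt (fun t => - gI t) (x * gI x) x := fun x _ => by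
    exact (gI_deriv x).neg.congr_deriv (by ring)
  have ht : Filter.Tendsto (fun t => - gI t) Filter.atTop (nhds 0) := by simpa using gI_tendsto.neg
  have hp : ∀ x ∈ Set.Ioi w, 0 ≤ x * gI x := fun x hx =>
    mul_nonneg (hw.trans (le_of_lt hx)) (gI_pos x).le
  refine ⟨MeasureTheory.integrableOn_Ioi_deriv_of_nonneg' hd hp ht, ?_⟩
  rw [MeasureTheory.integral_Ioi_of_hasDerivAt_of_nonneg' hd hp ht]
  ring

lemma mills (w : ℝ) (hw : 0 ≤ w) : w * ∫ t in Set.Ioi w, gI t ≤ gI w := by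
  rw [← (tail_int w hw).2, ← MeasureTheory.integral_const_mul]
  refine MeasureTheory.setIntegral_mono_on (gI_int.integrableOn.const_mul _) (tail_int w hw).1
    measurableSet_Ioi (fun x hx => ?_)
  exact mul_le_mul_of_nonneg_right (le_of_lt hx) (gI_pos x).le

/-- the upper Mills-type function -/
noncomputable def hM (w : ℝ) : ℝ :=
  Real.sqrt (2 * Real.pi) * Real.exp (w ^ 2 / 2) * (1 - stdNormalCDF w)

lemma hM_nonneg (w : ℝ) : 0 ≤ hM w := by
  have := Phi_le_one w
  unfold hM
  have : 0 ≤ 1 - stdNormalCDF w := by linarith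
  positivity

lemma hM_mills (w : ℝ) (hw : 0 ≤ w) : w * hM w ≤ 1 := by
  have h := mills w hw
  have h2 : w * hM w = Real.exp (w^2/2) * (w * ∫ t in Set.Ioi w, gI t) := by
    unfold hM; rw [Phi_compl]
    have := s2pi_pos
    field_simp
  rw [h2, ← exp_gI w]
  exact mul_le_mul_of_nonneg_left h (Real.exp_pos _).le

lemma hM_bdd (w : ℝ) (hw : 0 ≤ w) : hM w ≤ 9 := by
  by_cases h1 : 1 ≤ w
  · have := hM_mills w hw
    nlinarith [hM_nonneg w]
  · push Not at h1
    unfold hM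
    have a := s2pi_le
    have b : Real.exp (w^2/2) ≤ 3 := by
      calc Real.exp (w^2/2) ≤ Real.exp 1 := Real.exp_le_exp.mpr (by nlinarith)
        _ ≤ 3 := by linarith [Real.exp_one_lt_d9]
    have c : 1 - stdNormalCDF w ≤ 1 := by linarith [Phi_nonneg w]
    have c' : 0 ≤ 1 - stdNormalCDF w := by linarith [Phi_le_one w]
    have e := Real.exp_pos (w^2/2)
    calc _ ≤ 3 * 3 * (1:ℝ) := by gcongr
      _ = 9 := by norm_num

/-- Stein solution -/
noncomputable def fS (z w : ℝ) : ℝ :=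
  Real.sqrt (2 * Real.pi) * Real.exp (w ^ 2 / 2) *
    (stdNormalCDF (min w z) * (1 - stdNormalCDF (max w z)))

lemma fS_nonneg (z w : ℝ) : 0 ≤ fS z w := by
  have a := Phi_nonneg (min w z)
  have b : 0 ≤ 1 - stdNormalCDF (max w z) := by linarith [Phi_le_one (max w z)]
  unfold fS; positivity

lemma fS_le_hM (z w : ℝ) : fS z w ≤ hM |w| := by
  have a := Phi_nonneg (min w z)
  have a' := Phi_le_one (min w z)
  have b : 0 ≤ 1 - stdNormalCDF (max w z) := by linarith [Phi_le_one (max w z)]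
  have b' := Phi_nonneg (max w z)
  have c := Phi_mono (min_le_left w z)
  have d := Phi_mono (le_max_left w z)
  have s := s2pi_pos
  unfold fS hM
  rw [sq_abs]
  refine mul_le_mul_of_nonneg_left ?_ (by positivity)
  rcases le_total 0 w with h | h
  · rw [abs_of_nonneg h]; nlinarith
  · rw [abs_of_nonpos h, Phi_neg]; nlinarith

lemma fS_bdd (z w : ℝ) : |fS z w| ≤ 9 := by
  rw [abs_of_nonneg (fS_nonneg z w)]
  exact (fS_le_hM z w).trans (hM_bdd _ (abs_nonneg w))

lemma w_fS_bdd (z w : ℝ) : |w * fS z w| ≤ 1 := by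
  rw [abs_mul, abs_of_nonneg (fS_nonneg z w)]
  exact (mul_le_mul_of_nonneg_left (fS_le_hM z w) (abs_nonneg w)).trans (hM_mills _ (abs_nonneg w))

lemma fS_cont (z : ℝ) : Continuous (fS z) := by
  have := Phi_cont
  unfold fS; fun_prop

noncomputable def fS' (z w : ℝ) : ℝ := w * fS z w + (if w ≤ z then 1 else 0) - stdNormalCDF z

lemma fS_deriv (z w : ℝ) (hw : w ≠ z) : HasDerivAt (fS z) (fS' z w) w := by
  have hs := s2pi_pos
  have he := exp_gI w
  rcases lt_or_gt_of_ne hw with h | h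
  · have h1 : fS z =ᶠ[nhds w] fun w => Real.sqrt (2 * Real.pi) * Real.exp (w ^ 2 / 2) *
      (stdNormalCDF w * (1 - stdNormalCDF z)) := by
      filter_upwards [Iio_mem_nhds h] with v hv
      unfold fS
      rw [min_eq_left (le_of_lt hv), max_eq_right (le_of_lt hv)]
    refine HasDerivAt.congr_of_eventuallyEq ?_ h1
    have := ((gI_inv_deriv w).const_mul (Real.sqrt (2 * Real.pi))).mul
      ((Phi_deriv w).mul_const (1 - stdNormalCDF z))
    refine this.congr_deriv (Eq.symm ?_)
    unfold fS' fS
    rw [min_eq_left h.le, max_eq_right h.le, if_pos h.le]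
    have : Real.sqrt (2 * Real.pi) * Real.exp (w ^ 2 / 2) * ((Real.sqrt (2 * Real.pi))⁻¹ * gI w * (1 - stdNormalCDF z))
      = (Real.exp (w ^ 2 / 2) * gI w) * (1 - stdNormalCDF z) := by field_simp
    rw [this, he]; ring
  · have h1 : fS z =ᶠ[nhds w] fun w => Real.sqrt (2 * Real.pi) * Real.exp (w ^ 2 / 2) *
      (stdNormalCDF z * (1 - stdNormalCDF w)) := by
      filter_upwards [Ioi_mem_nhds h] with v hv
      unfold fS
      rw [min_eq_right (le_of_lt hv), max_eq_left (le_of_lt hv)]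
    refine HasDerivAt.congr_of_eventuallyEq ?_ h1
    have := ((gI_inv_deriv w).const_mul (Real.sqrt (2 * Real.pi))).mul
      (((Phi_deriv w).const_sub 1).const_mul (stdNormalCDF z))
    refine this.congr_deriv (Eq.symm ?_)
    unfold fS' fS
    rw [min_eq_right h.le, max_eq_left h.le, if_neg (not_le.mpr h)]
    have : Real.sqrt (2 * Real.pi) * Real.exp (w ^ 2 / 2) * (stdNormalCDF z * -((Real.sqrt (2 * Real.pi))⁻¹ * gI w))
      = -(Real.exp (w ^ 2 / 2) * gI w) * stdNormalCDF z := by field_simp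
    rw [this, he]; ring

lemma fS'_bdd (z w : ℝ) : |fS' z w| ≤ 2 := by
  have h := abs_le.mp (w_fS_bdd z w)
  have a := Phi_nonneg z
  have b := Phi_le_one z
  unfold fS'
  rw [abs_le]
  split_ifs <;> constructor <;> linarith

lemma fS'_meas (z : ℝ) : Measurable (fS' z) := by
  unfold fS'
  have := (fS_cont z).measurable
  have h2 : Measurable (fun w : ℝ => if w ≤ z then (1:ℝ) else 0) :=
    Measurable.ite measurableSet_Iic measurable_const measurable_const
  fun_prop

lemma fS'_intble (z a b : ℝ) : IntervalIntegrable (fS' z) MeasureTheory.volume a b := by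
  refine IntervalIntegrable.mono_fun (g := fS' z) (f := fun _ => (2:ℝ)) (by simp) 
    (fS'_meas z).aestronglyMeasurable ?_
  filter_upwards with w
  simpa using fS'_bdd z w

lemma fS_ftc (z a b : ℝ) : ∫ w in a..b, fS' z w = fS z b - fS z a := by
  refine MeasureTheory.integral_eq_of_hasDerivAt_off_countable (fS z) (fS' z) (Set.countable_singleton z)
    (fS_cont z).continuousOn (fun x hx => fS_deriv z x hx.2) (fS'_intble z a b)

/-- mean value inequalities for the Stein solution -/
lemma fS_mv (z a X M : ℝ) (h : ∀ y, |y - a| ≤ |X| → fS' z y ≤ M) :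
    X * (fS z (a + X) - fS z a) ≤ X ^ 2 * M := by
  rw [← fS_ftc]
  rcases le_total 0 X with hX | hX
  · have : ∫ w in a..(a+X), fS' z w ≤ ∫ w in a..(a+X), M := by
      refine intervalIntegral.integral_mono_on (by linarith) (fS'_intble z _ _) (by simp) ?_
      intro y hy
      apply h
      rw [abs_of_nonneg hX, abs_le]; constructor <;> linarith [hy.1, hy.2]
    rw [intervalIntegral.integral_const] at this
    simp only [smul_eq_mul] at this
    nlinarith
  · rw [intervalIntegral.integral_symm]
    have : ∫ w in (a+X)..a, fS' z w ≤ ∫ w in (a+X)..a, M := by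
      refine intervalIntegral.integral_mono_on (by linarith) (fS'_intble z _ _) (by simp) ?_
      intro y hy
      apply h
      rw [abs_of_nonpos hX, abs_le]; constructor <;> linarith [hy.1, hy.2]
    rw [intervalIntegral.integral_const] at this
    simp only [smul_eq_mul] at this
    nlinarith

lemma fS_mv' (z a X M : ℝ) (h : ∀ y, |y - a| ≤ |X| → M ≤ fS' z y) :
    X ^ 2 * M ≤ X * (fS z (a + X) - fS z a) := by
  rw [← fS_ftc]
  rcases le_total 0 X with hX | hX
  · have : ∫ w in a..(a+X), M ≤ ∫ w in a..(a+X), fS' z w := by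
      refine intervalIntegral.integral_mono_on (by linarith) (by simp) (fS'_intble z _ _) ?_
      intro y hy
      apply h
      rw [abs_of_nonneg hX, abs_le]; constructor <;> linarith [hy.1, hy.2]
    rw [intervalIntegral.integral_const] at this
    simp only [smul_eq_mul] at this
    nlinarith
  · rw [intervalIntegral.integral_symm]
    have : ∫ w in (a+X)..a, M ≤ ∫ w in (a+X)..a, fS' z w := by
      refine intervalIntegral.integral_mono_on (by linarith) (by simp) (fS'_intble z _ _) ?_
      intro y hy
      apply h
      rw [abs_of_nonpos hX, abs_le]; constructor <;> linarith [hy.1, hy.2]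
    rw [intervalIntegral.integral_const] at this
    simp only [smul_eq_mul] at this
    nlinarith

lemma fS_lip (z a b : ℝ) : |fS z b - fS z a| ≤ 2 * |b - a| := by
  rw [← fS_ftc]
  have := intervalIntegral.norm_integral_le_of_norm_le_const (a := a) (b := b) (f := fS' z) (C := 2)
    (fun x _ => by simpa using fS'_bdd z x)
  simpa using this

lemma wfS_lip (z y w D : ℝ) (h : |y - w| ≤ D) :
    |y * fS z y - w * fS z w| ≤ (2 * |w| + 9) * D := by
  have e : y * fS z y - w * fS z w = w * (fS z y - fS z w) + (y - w) * fS z y := by ring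
  rw [e]
  calc _ ≤ |w * (fS z y - fS z w)| + |(y - w) * fS z y| := abs_add_le _ _
    _ = |w| * |fS z y - fS z w| + |y - w| * |fS z y| := by rw [abs_mul, abs_mul]
    _ ≤ |w| * (2 * D) + D * 9 := by
      gcongr
      · exact (fS_lip z w y).trans (by linarith)
      · linarith [abs_nonneg (y-w)]
      · exact fS_bdd z y
    _ = _ := by ring

lemma fS'_upper (z y w D : ℝ) (h : |y - w| ≤ D) :
    fS' z y ≤ w * fS z w + (if w ≤ z + D then 1 else 0) - stdNormalCDF z + (2 * |w| + 9) * D := by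
  have h1 := (abs_le.mp (wfS_lip z y w D h)).2
  have h2 := abs_le.mp h
  unfold fS'
  split_ifs with h3 h4 <;> linarith

lemma fS'_lower (z y w D : ℝ) (h : |y - w| ≤ D) :
    w * fS z w + (if w ≤ z - D then 1 else 0) - stdNormalCDF z - (2 * |w| + 9) * D ≤ fS' z y := by
  have h1 := (abs_le.mp (wfS_lip z y w D h)).1
  have h2 := abs_le.mp h
  unfold fS'
  split_ifs with h3 h4 <;> linarith

/-- scaling -/
lemma Phi_scale (a x : ℝ) (ha : 0 ≤ a) : |stdNormalCDF (a * x) - stdNormalCDF x| ≤ 4 * |a - 1| := by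
  by_cases h2 : a ≤ 1/2
  · have := Phi_nonneg (a*x); have := Phi_le_one (a*x); have := Phi_nonneg x; have := Phi_le_one x
    rw [abs_of_nonpos (by linarith : a - 1 ≤ 0), abs_le]; constructor <;> linarith
  · push Not at h2
    -- on s in [min a 1, max a 1], derivative in s of Φ(s x) is x φ(s x), bounded by 4
    have key : ∀ s ∈ Set.Ici (1/2 : ℝ), HasDerivWithinAt (fun s => stdNormalCDF (s * x))
        (((Real.sqrt (2 * Real.pi))⁻¹ * gI (s * x)) * x) (Set.Ici (1/2)) s := by
      intro s _
      have h1 : HasDerivAt (fun s : ℝ => s * x) x s := by simpa using (hasDerivAt_id s).mul_const x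
      exact ((Phi_deriv (s * x)).comp s h1).hasDerivWithinAt
    have bd : ∀ s ∈ Set.Ici (1/2 : ℝ), ‖((Real.sqrt (2 * Real.pi))⁻¹ * gI (s * x)) * x‖ ≤ 4 := by
      intro s hs
      have hs : (1/2:ℝ) ≤ s := hs
      rw [Real.norm_eq_abs, abs_mul, abs_of_nonneg (mul_nonneg (inv_nonneg.mpr s2pi_pos.le) (gI_pos _).le)]
      have e1 : gI (s * x) * (1 + (s*x)^2/2) ≤ 1 := by
        refine le_of_le_of_eq ?_ (exp_gI (s*x))
        rw [mul_comm]
        refine mul_le_mul_of_nonneg_right ?_ (gI_pos _).le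
        linarith [Real.add_one_le_exp ((s*x)^2/2)]
      have e2 : |x| ≤ 4 * (1 + (s*x)^2/2) := by
        have : (1/4) * |x|^2 ≤ (s*x)^2 := by
          rw [sq_abs, mul_pow]; exact mul_le_mul_of_nonneg_right (by nlinarith) (sq_nonneg x)
        nlinarith [sq_nonneg (|x| - 4)]
      have g := gI_pos (s*x)
      calc _ ≤ (1 * gI (s*x)) * |x| := by gcongr; exact s2pi_inv_le_one
        _ ≤ gI (s*x) * (4 * (1 + (s*x)^2/2)) := by rw [one_mul]; gcongr
        _ ≤ 4 := by linarith
    have := Convex.norm_image_sub_le_of_norm_hasDerivWithin_le key bd (convex_Ici _)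
      (show (1:ℝ) ∈ Set.Ici (1/2:ℝ) by norm_num) (show a ∈ Set.Ici (1/2:ℝ) from h2.le)
    simpa using this
/-! Berry-Esseen for sums of i.i.d. finite variables by zero-bias Stein argument -/
section BE
variable {ι α : Type} [Fintype ι] [DecidableEq ι] [Fintype α]

lemma swap_sum (i : ι) (F : (ι → α) → α → ℝ) :
    ∑ u : ι → α, ∑ v : α, F u v = ∑ u : ι → α, ∑ v : α, F (Function.update u i v) (u i) := by
  rw [← Fintype.sum_prod_type', ← Fintype.sum_prod_type']
  let e : ((ι → α) × α) ≃ ((ι → α) × α) :=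
    Function.Involutive.toPerm (fun p => (Function.update p.1 i p.2, p.1 i)) (by
      intro p; simp)
  rw [← Equiv.sum_comp e]
  rfl

lemma resample (X : α → ℝ) (hX : ∑ v, X v = 0) (i : ι) (f : ℝ → ℝ) :
    (Fintype.card α : ℝ) * ∑ u : ι → α, X (u i) * f (∑ j, X (u j)) =
      ∑ u : ι → α, ∑ v, X v * (f ((∑ j, X (u j) - X (u i)) + X v) - f (∑ j, X (u j) - X (u i))) := by
  have h1 : ∑ u : ι → α, ∑ v : α, X (u i) * f (∑ j, X (u j)) =
      (Fintype.card α : ℝ) * ∑ u : ι → α, X (u i) * f (∑ j, X (u j)) := by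
    simp [Finset.mul_sum]
  rw [← h1, swap_sum i]
  refine Finset.sum_congr rfl fun u _ => ?_
  have h2 : ∑ v, X v * f (∑ j, X (u j) - X (u i)) = 0 := by
    rw [← Finset.sum_mul, hX, zero_mul]
  have h3 : ∀ v, ∑ j, X (Function.update u i v j) = (∑ j, X (u j) - X (u i)) + X v := by
    intro v
    rw [← Finset.add_sum_erase _ _ (Finset.mem_univ i), ← Finset.add_sum_erase _ (fun j => X (u j)) (Finset.mem_univ i)]
    have : ∑ j ∈ Finset.univ.erase i, X (Function.update u i v j) = ∑ j ∈ Finset.univ.erase i, X (u j) := by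
      refine Finset.sum_congr rfl fun j hj => ?_
      rw [Function.update_of_ne (Finset.ne_of_mem_erase hj)]
    rw [this, Function.update_self]; ring
  simp only [mul_sub, Finset.sum_sub_distrib, h2, sub_zero, Function.update_self, h3]

lemma resample_sum (X : α → ℝ) (hX : ∑ v, X v = 0) (f : ℝ → ℝ) :
    (Fintype.card α : ℝ) * ∑ u : ι → α, (∑ j, X (u j)) * f (∑ j, X (u j)) =
      ∑ i, ∑ u : ι → α, ∑ v, X v * (f ((∑ j, X (u j) - X (u i)) + X v) - f (∑ j, X (u j) - X (u i))) := by
  rw [Finset.sum_congr rfl fun i _ => (resample X hX i f).symm, ← Finset.mul_sum, Finset.sum_comm]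
  congr 1
  refine Finset.sum_congr rfl fun u _ => ?_
  rw [Finset.sum_mul]

lemma second_moment (X : α → ℝ) (hX : ∑ v, X v = 0) [Nonempty α]:
    (Fintype.card α : ℝ) * ∑ u : ι → α, (∑ j, X (u j)) ^ 2 =
      (Fintype.card ι : ℝ) * Fintype.card (ι → α) * ∑ v, X v ^ 2 := by
  have := resample_sum (ι := ι) X hX id
  simp only [id, add_sub_cancel_left] at this
  simp only [sq]
  rw [this]
  simp [mul_assoc]

variable [Nonempty α]

lemma first_abs (X : α → ℝ) (hX : ∑ v, X v = 0)
    (hV : (Fintype.card ι : ℝ) * ∑ v, X v ^ 2 = Fintype.card α) :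
    ∑ u : ι → α, |∑ j, X (u j)| ≤ Fintype.card (ι → α) := by
  have hc : (0:ℝ) < Fintype.card α := by exact_mod_cast Fintype.card_pos
  have h2 : ∑ u : ι → α, (∑ j, X (u j)) ^ 2 = Fintype.card (ι → α) := by
    have := second_moment (ι := ι) X hX
    have e : (Fintype.card ι : ℝ) * Fintype.card (ι → α) * ∑ v, X v ^ 2 =
      Fintype.card α * Fintype.card (ι → α) := by rw [← hV]; ring
    rw [e] at this
    exact mul_left_cancel₀ hc.ne' this
  have h3 : ∀ u : ι → α, |∑ j, X (u j)| ≤ (1 + (∑ j, X (u j)) ^ 2) / 2 := by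
    intro u
    nlinarith [sq_nonneg (|∑ j, X (u j)| - 1), sq_abs (∑ j, X (u j))]
  refine (Finset.sum_le_sum fun u _ => h3 u).trans ?_
  rw [← Finset.sum_div, Finset.sum_add_distrib, h2]
  simp

lemma sum_U (c : ℝ) (X : α → ℝ) 
    (hV : (Fintype.card ι : ℝ) * ∑ v, X v ^ 2 = c) (U : (ι → α) → ℝ) :
    ∑ _i : ι, ∑ u : ι → α, ∑ v, X v ^ 2 * U u = c * ∑ u, U u := by
  simp only [← Finset.sum_mul, ← Finset.mul_sum, Finset.sum_const, Finset.card_univ, nsmul_eq_mul]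
  rw [← hV, mul_assoc]

lemma BE_upper (X : α → ℝ) (hX : ∑ v, X v = 0)
    (hV : (Fintype.card ι : ℝ) * ∑ v, X v ^ 2 = Fintype.card α) (δ : ℝ) (hδ : ∀ v, |X v| ≤ δ) (z : ℝ) :
    stdNormalCDF z * Fintype.card (ι → α) ≤
      (∑ u : ι → α, if ∑ j, X (u j) ≤ z + 2 * δ then (1:ℝ) else 0) + 22 * δ * Fintype.card (ι → α) := by
  have hc : (0:ℝ) < Fintype.card α := by exact_mod_cast Fintype.card_pos
  have hδ0 : 0 ≤ δ := (abs_nonneg _).trans (hδ (Classical.arbitrary α))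
  set U : (ι → α) → ℝ := fun u => (∑ j, X (u j)) * fS z (∑ j, X (u j)) +
    (if ∑ j, X (u j) ≤ z + 2 * δ then 1 else 0) - stdNormalCDF z + (2 * |∑ j, X (u j)| + 9) * (2 * δ) with hU
  have h1 : (Fintype.card α : ℝ) * ∑ u : ι → α, (∑ j, X (u j)) * fS z (∑ j, X (u j)) ≤
      Fintype.card α * ∑ u, U u := by
    rw [resample_sum X hX, ← sum_U _ X hV U]
    refine Finset.sum_le_sum fun i _ => Finset.sum_le_sum fun u _ => Finset.sum_le_sum fun v _ => ?_
    refine fS_mv z _ _ _ fun y hy => fS'_upper z y _ _ ?_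
    have a := abs_le.mp (hy.trans (hδ v))
    have b := abs_le.mp (hδ (u i))
    rw [abs_le]; constructor <;> linarith [a.1, a.2, b.1, b.2]
  have h2 := le_of_mul_le_mul_left h1 hc
  have h3 := first_abs (ι := ι) X hX hV
  simp only [hU, Finset.sum_add_distrib, Finset.sum_sub_distrib, ← Finset.sum_mul, ← Finset.mul_sum,
    Finset.sum_const, Finset.card_univ, nsmul_eq_mul] at h2
  nlinarith

lemma BE_lower (X : α → ℝ) (hX : ∑ v, X v = 0)
    (hV : (Fintype.card ι : ℝ) * ∑ v, X v ^ 2 = Fintype.card α) (δ : ℝ) (hδ : ∀ v, |X v| ≤ δ) (z : ℝ) :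
      (∑ u : ι → α, if ∑ j, X (u j) ≤ z - 2 * δ then (1:ℝ) else 0) ≤
      stdNormalCDF z * Fintype.card (ι → α) + 22 * δ * Fintype.card (ι → α) := by
  have hc : (0:ℝ) < Fintype.card α := by exact_mod_cast Fintype.card_pos
  have hδ0 : 0 ≤ δ := (abs_nonneg _).trans (hδ (Classical.arbitrary α))
  set U : (ι → α) → ℝ := fun u => (∑ j, X (u j)) * fS z (∑ j, X (u j)) +
    (if ∑ j, X (u j) ≤ z - 2 * δ then 1 else 0) - stdNormalCDF z - (2 * |∑ j, X (u j)| + 9) * (2 * δ) with hU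
  have h1 : Fintype.card α * ∑ u, U u ≤
    (Fintype.card α : ℝ) * ∑ u : ι → α, (∑ j, X (u j)) * fS z (∑ j, X (u j)) := by
    rw [resample_sum X hX, ← sum_U _ X hV U]
    refine Finset.sum_le_sum fun i _ => Finset.sum_le_sum fun u _ => Finset.sum_le_sum fun v _ => ?_
    refine fS_mv' z _ _ _ fun y hy => fS'_lower z y _ _ ?_
    have a := abs_le.mp (hy.trans (hδ v))
    have b := abs_le.mp (hδ (u i))
    rw [abs_le]; constructor <;> linarith [a.1, a.2, b.1, b.2]
  have h2 := le_of_mul_le_mul_left h1 hc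
  have h3 := first_abs (ι := ι) X hX hV
  simp only [hU, Finset.sum_add_distrib, Finset.sum_sub_distrib, ← Finset.sum_mul, ← Finset.mul_sum,
    Finset.sum_const, Finset.card_univ, nsmul_eq_mul] at h2
  nlinarith

lemma BE_iid (X : α → ℝ) (hX : ∑ v, X v = 0)
    (hV : (Fintype.card ι : ℝ) * ∑ v, X v ^ 2 = Fintype.card α) (δ : ℝ) (hδ : ∀ v, |X v| ≤ δ) (z : ℝ) :
    |(∑ u : ι → α, if ∑ j, X (u j) ≤ z then (1:ℝ) else 0) / Fintype.card (ι → α) - stdNormalCDF z|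
      ≤ 24 * δ := by
  have hc : (0:ℝ) < Fintype.card (ι → α) := by exact_mod_cast Fintype.card_pos
  have hδ0 : 0 ≤ δ := (abs_nonneg _).trans (hδ (Classical.arbitrary α))
  have a := BE_upper (ι := ι) X hX hV δ hδ (z - 2 * δ)
  have b := BE_lower (ι := ι) X hX hV δ hδ (z + 2 * δ)
  rw [sub_add_cancel] at a
  rw [add_sub_cancel_right] at b
  have c := Phi_lip (z - 2 * δ) z
  have d := Phi_lip (z + 2 * δ) z
  rw [sub_sub_cancel_left, abs_neg, abs_of_nonneg (by linarith : 0 ≤ 2 * δ)] at c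
  rw [add_sub_cancel_left, abs_of_nonneg (by linarith : 0 ≤ 2 * δ)] at d
  have c := abs_le.mp c
  have d := abs_le.mp d
  rw [abs_le]
  constructor
  · have : stdNormalCDF z - 24 * δ ≤ (∑ u : ι → α, if ∑ j, X (u j) ≤ z then (1:ℝ) else 0) / Fintype.card (ι → α) := by
      rw [le_div_iff₀ hc]; nlinarith
    linarith
  · have : (∑ u : ι → α, if ∑ j, X (u j) ≤ z then (1:ℝ) else 0) / Fintype.card (ι → α) ≤ stdNormalCDF z + 24 * δ := by
      rw [div_le_iff₀ hc]; nlinarith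
    linarith
end BE
/-! Words and permutations -/
def wdes {n N : ℕ} (s : Fin n → Fin N) : ℕ :=
  (Finset.univ.filter fun i : Fin n =>
    ∃ h : (i : ℕ) + 1 < n, s ⟨(i : ℕ) + 1, h⟩ < s i).card

lemma descents_eq_wdes {n : ℕ} (π : Equiv.Perm (Fin n)) : descents π = wdes (fun i => π i) := rfl

lemma div_step (N a e : ℕ) (he : e < N) :
    (a + e) / N = a / N + if (a + e) % N < a % N then 1 else 0 := by
  have hN : 0 < N := by omega
  have h1 := Nat.mod_lt a hN
  have h2 := Nat.div_add_mod a N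
  have h3 := Nat.mod_lt (a + e) hN
  have h4 := Nat.div_add_mod (a + e) N
  rw [Nat.add_div hN, Nat.div_eq_of_lt he, Nat.add_mod, Nat.mod_eq_of_lt he]
  by_cases h : N ≤ a % N + e
  · rw [if_pos h, if_pos]
    · rw [Nat.mod_eq_sub_mod h, Nat.mod_eq_of_lt (by omega)]; omega
  · rw [if_neg h, if_neg]
    · rw [Nat.mod_eq_of_lt (by omega)]; omega

lemma tele (N : ℕ) (e : ℕ → ℕ) (he : ∀ j, e j < N) (m : ℕ) :
    (∑ i ∈ range m, if (∑ j ∈ range (i + 2), e j) % N < (∑ j ∈ range (i + 1), e j) % N then 1 else 0)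
      = (∑ j ∈ range (m + 1), e j) / N := by
  induction m with
  | zero => simp [Nat.div_eq_of_lt (he 0)]
  | succ m ih =>
    rw [Finset.sum_range_succ, ih, Finset.sum_range_succ e (m + 1), div_step N _ _ (he (m+1))]

/-- extension of a word by zero -/
def extw {n N : ℕ} (u : Fin n → Fin N) (j : ℕ) : ℕ := if h : j < n then (u ⟨j, h⟩ : ℕ) else 0

lemma extw_lt {n N : ℕ} (hN : 0 < N) (u : Fin n → Fin N) (j : ℕ) : extw u j < N := by
  unfold extw; split_ifs
  · exact (u _).2
  · exact hN

lemma extw_sum {n N : ℕ} (u : Fin n → Fin N) : ∑ j ∈ range n, extw u j = ∑ i, (u i : ℕ) := by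
  rw [← Fin.sum_univ_eq_sum_range]
  refine Finset.sum_congr rfl fun i _ => ?_
  simp [extw]

/-- partial sums mod N -/
def pword {n N : ℕ} (hN : 0 < N) (u : Fin n → Fin N) : Fin n → Fin N := fun i =>
  ⟨(∑ j ∈ range ((i : ℕ) + 1), extw u j) % N, Nat.mod_lt _ hN⟩

lemma pword_inj {n N : ℕ} (hN : 0 < N) : Function.Injective (pword (n := n) hN) := by
  intro u v h
  have h1 : ∀ k, k ≤ n → (∑ j ∈ range k, extw u j) % N = (∑ j ∈ range k, extw v j) % N := by
    intro k hk
    rcases k with _ | k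
    · simp
    · have := congrFun h ⟨k, hk⟩
      simpa [pword, Fin.ext_iff] using this
  funext i
  have a : _ ≡ _ [MOD N] := h1 i i.2.le
  have b : _ ≡ _ [MOD N] := h1 (i+1) i.2
  rw [Finset.sum_range_succ, Finset.sum_range_succ] at b
  have c := Nat.ModEq.add_left_cancel a b
  have d := Nat.ModEq.eq_of_lt_of_lt c (extw_lt hN u i) (extw_lt hN v i)
  simpa [extw, Fin.ext_iff] using d

lemma wdes_pword {n N : ℕ} (hN : 0 < N) (u : Fin n → Fin N) :
    wdes (pword hN u) = (∑ i, (u i : ℕ)) / N := by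
  rw [← extw_sum]
  rcases n with _ | m
  · simp [wdes]
  rw [← tele N _ (extw_lt hN u) m]
  unfold wdes
  rw [Finset.card_filter, Fin.sum_univ_castSucc]
  rw [← Fin.sum_univ_eq_sum_range (fun i => if (∑ j ∈ range (i + 2), extw u j) % N < (∑ j ∈ range (i + 1), extw u j) % N then 1 else 0) m]
  rw [if_neg (by simp), add_zero]
  refine Finset.sum_congr rfl fun i _ => ?_
  have h' : (i : ℕ) + 1 < m + 1 := by simp
  simp only [pword, Fin.lt_def, Fin.val_castSucc, add_assoc, Nat.reduceAdd, exists_prop, h', true_and]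

lemma sum_words {n N : ℕ} (hN : 0 < N) (g : ℕ → ℝ) :
    ∑ s : Fin n → Fin N, g (wdes s) = ∑ u : Fin n → Fin N, g ((∑ i, (u i : ℕ)) / N) := by
  have hb : Function.Bijective (pword (n := n) hN) :=
    (Finite.injective_iff_bijective).mp (pword_inj hN)
  rw [← hb.sum_comp (fun s => g (wdes s))]
  simp only [wdes_pword]

lemma wdes_comp {n N : ℕ} (t : Fin n ↪o Fin N) (π : Equiv.Perm (Fin n)) :
    wdes (fun i => t (π i)) = descents π := by
  rw [descents_eq_wdes]; unfold wdes
  simp only [OrderEmbedding.lt_iff_lt]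

lemma sum_inj {n N : ℕ} (g : ℕ → ℝ) :
    ∑ s ∈ (Finset.univ : Finset (Fin n → Fin N)).filter Function.Injective, g (wdes s) =
      (Fintype.card (Fin n ↪o Fin N) : ℝ) * ∑ π : Equiv.Perm (Fin n), g (descents π) := by
  have : (Fintype.card (Fin n ↪o Fin N) : ℝ) * ∑ π : Equiv.Perm (Fin n), g (descents π) =
      ∑ p : (Fin n ↪o Fin N) × Equiv.Perm (Fin n), g (descents p.2) := by
    rw [Fintype.sum_prod_type]; simp
  rw [this]
  symm
  refine Finset.sum_bij (fun p _ => fun i => p.1 (p.2 i)) ?_ ?_ ?_ ?_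
  · intro p _
    simp only [mem_filter, mem_univ, true_and]
    exact p.1.injective.comp p.2.injective
  · rintro ⟨t, π⟩ _ ⟨t', π'⟩ _ h
    have hf : (t : Fin n → Fin N) ∘ π = t' ∘ π' := h
    have hr : Set.range t = Set.range t' := by
      have := congrArg Set.range hf
      rwa [Set.range_comp, Set.range_comp, π.surjective.range_eq, π'.surjective.range_eq,
        Set.image_univ, Set.image_univ] at this
    have ht : t = t' := by
      have := (StrictMono.range_inj t.strictMono t'.strictMono).mp hr
      exact DFunLike.coe_injective this
    subst ht
    have : π = π' := by
      ext i
      have := congrFun hf i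
      exact congrArg Fin.val (t.injective this)
    rw [this]
  · intro s hs
    simp only [mem_filter, mem_univ, true_and] at hs
    have hm : StrictMono (s ∘ Tuple.sort s) :=
      (Tuple.monotone_sort s).strictMono_of_injective (hs.comp (Tuple.sort s).injective)
    refine ⟨(OrderEmbedding.ofStrictMono _ hm, (Tuple.sort s)⁻¹), Finset.mem_univ _, ?_⟩
    funext i
    simp
  · rintro ⟨t, π⟩ _
    rw [wdes_comp]

lemma inj_card {n N : ℕ} : ((Finset.univ : Finset (Fin n → Fin N)).filter Function.Injective).card
    = N.descFactorial n := by
  have := Fintype.card_embedding_eq (α := Fin n) (β := Fin N)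
  rw [Fintype.card_fin, Fintype.card_fin] at this
  rw [← this, ← Fintype.card_subtype]
  exact Fintype.card_congr (Equiv.subtypeInjectiveEquivEmbedding _ _)

lemma inj_card_lower {n N : ℕ} (hn : n ≤ N) (hN : 0 < N) :
    (N : ℝ) ^ n * (1 - (n:ℝ)^2 / N) ≤ (N.descFactorial n : ℝ) := by
  have hN' : (0:ℝ) < N := by exact_mod_cast hN
  have h1 : ((N - n : ℕ) : ℝ) ^ n ≤ (N.descFactorial n : ℝ) := by
    have h := Nat.pow_sub_le_descFactorial N n
    have h2 : (N - n) ^ n ≤ (N + 1 - n) ^ n := Nat.pow_le_pow_left (by omega) _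
    exact_mod_cast h2.trans h
  refine le_trans ?_ h1
  have h3 := one_add_mul_le_pow (a := -((n:ℝ)/N)) (by
    have : (n:ℝ)/N ≤ 1 := by rw [div_le_one hN']; exact_mod_cast hn
    linarith) n
  have e : ((N - n : ℕ) : ℝ) = N * (1 + -((n:ℝ)/N)) := by
    rw [Nat.cast_sub hn]; field_simp; ring
  rw [e, mul_pow]
  refine mul_le_mul_of_nonneg_left (le_trans (le_of_eq ?_) h3) (by positivity)
  field_simp; ring

lemma wdes_le {n N : ℕ} (s : Fin n → Fin N) : wdes s ≤ n := by
  unfold wdes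
  exact (Finset.card_le_univ _).trans (by simp)

lemma descents_le {n : ℕ} (π : Equiv.Perm (Fin n)) : descents π ≤ n := wdes_le _

/-- average over permutations -/
noncomputable def Ep (n : ℕ) (g : ℕ → ℝ) : ℝ := (∑ π : Equiv.Perm (Fin n), g (descents π)) / (n.factorial : ℝ)

/-- average over words -/
noncomputable def Ew (n N : ℕ) (g : ℕ → ℝ) : ℝ :=
  (∑ u : Fin n → Fin N, g ((∑ i, (u i : ℕ)) / N)) / ((N : ℝ) ^ n)

lemma Ep_Ew {n N : ℕ} (hn : n ≤ N) (hN : 0 < N) (g : ℕ → ℝ) (M : ℝ) (hM : ∀ k ≤ n, |g k| ≤ M) :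
    |Ew n N g - Ep n g| ≤ 2 * M * (n:ℝ)^2 / N := by
  have hN' : (0:ℝ) < N := by exact_mod_cast hN
  have hM0 : 0 ≤ M := (abs_nonneg _).trans (hM 0 (Nat.zero_le _))
  have hnf : (0:ℝ) < (n.factorial : ℝ) := by exact_mod_cast Nat.factorial_pos n
  set I := ((Finset.univ : Finset (Fin n → Fin N)).filter Function.Injective) with hI
  set J := ((Finset.univ : Finset (Fin n → Fin N)).filter (fun s => ¬ Function.Injective s)) with hJ
  set K : ℝ := (Fintype.card (Fin n ↪o Fin N) : ℝ)
  have hIc : (I.card : ℝ) = K * n.factorial := by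
    have := sum_inj (n := n) (N := N) (fun _ => (1:ℝ))
    simpa [Fintype.card_perm] using this
  have hIl : (N : ℝ) ^ n * (1 - (n:ℝ)^2 / N) ≤ I.card := by
    rw [hI, inj_card]; exact inj_card_lower hn hN
  have hIJ : (I.card : ℝ) + J.card = (N:ℝ)^n := by
    have := Finset.card_filter_add_card_filter_not (s := (Finset.univ : Finset (Fin n → Fin N))) (p := Function.Injective)
    rw [Finset.card_univ, Fintype.card_fun, Fintype.card_fin, Fintype.card_fin] at this
    exact_mod_cast this
  have hsum : ∑ u : Fin n → Fin N, g ((∑ i, (u i : ℕ)) / N) =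
      I.card * Ep n g + ∑ s ∈ J, g (wdes s) := by
    rw [← sum_words hN, ← Finset.sum_filter_add_sum_filter_not Finset.univ Function.Injective, sum_inj, hIc]
    unfold Ep; field_simp
    simp only [K, hJ]; ring
  have hJs : |∑ s ∈ J, g (wdes s)| ≤ J.card * M := by
    refine (Finset.abs_sum_le_sum_abs _ _).trans ?_
    refine (Finset.sum_le_card_nsmul _ _ M fun s _ => hM _ (wdes_le s)).trans ?_
    simp
  have hEp : |Ep n g| ≤ M := by
    unfold Ep
    rw [abs_div, abs_of_pos hnf, div_le_iff₀ hnf]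
    refine (Finset.abs_sum_le_sum_abs _ _).trans ?_
    refine (Finset.sum_le_card_nsmul _ _ M fun s _ => hM _ (descents_le s)).trans ?_
    rw [Finset.card_univ, Fintype.card_perm, Fintype.card_fin, nsmul_eq_mul, mul_comm]
  have hp : (0:ℝ) < (N:ℝ)^n := by positivity
  unfold Ew
  rw [hsum]
  have e : (I.card * Ep n g + ∑ s ∈ J, g (wdes s)) / (N:ℝ)^n - Ep n g =
     (∑ s ∈ J, g (wdes s) - J.card * Ep n g) / (N:ℝ)^n := by
    rw [div_sub' hp.ne', ← hIJ]; congr 1; ring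
  rw [e, abs_div, abs_of_pos hp, div_le_iff₀ hp]
  have hJc : (J.card : ℝ) ≤ (N:ℝ)^n * ((n:ℝ)^2 / N) := by linarith
  have hJ0 : (0:ℝ) ≤ J.card := by positivity
  calc _ ≤ |∑ s ∈ J, g (wdes s)| + |J.card * Ep n g| := abs_sub _ _
    _ ≤ J.card * M + J.card * M := by
      rw [abs_mul, abs_of_nonneg hJ0]; gcongr
    _ = J.card * (2 * M) := by ring
    _ ≤ ((N:ℝ)^n * ((n:ℝ)^2 / N)) * (2 * M) := by gcongr
    _ = _ := by ring
/-! CLT with rate for descents of uniform permutations -/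
lemma sum_fin_id (N : ℕ) : ∑ v : Fin N, (v : ℝ) = N * (N - 1) / 2 := by
  rw [Fin.sum_univ_eq_sum_range (fun i => (i:ℝ)) N]
  induction N with
  | zero => simp
  | succ m ih => rw [Finset.sum_range_succ, ih]; push_cast; ring

lemma sum_fin_sq (N : ℕ) : ∑ v : Fin N, (v : ℝ) ^ 2 = N * (N - 1) * (2 * N - 1) / 6 := by
  rw [Fin.sum_univ_eq_sum_range (fun i => (i:ℝ)^2) N]
  induction N with
  | zero => simp
  | succ m ih => rw [Finset.sum_range_succ, ih]; push_cast; ring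

lemma ind_mono {p q : Prop} [Decidable p] [Decidable q] (h : p → q) :
    (if p then (1:ℝ) else 0) ≤ if q then 1 else 0 := by
  split_ifs with h1 h2 <;> first | exact absurd (h h1) h2 | norm_num

set_option maxHeartbeats 1000000 in
lemma perm_clt (n : ℕ) (hn : 2 ≤ n) : ∃ c σ : ℝ, 0 < σ ∧ (n:ℝ) / 24 ≤ σ ^ 2 ∧ σ ^ 2 ≤ n ∧
    (∀ y : ℝ, |Ep n (fun k => if (k:ℝ) ≤ y then 1 else 0) - stdNormalCDF ((y - c) / σ)| ≤ 15 / σ) ∧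
    |Ep n (fun k => (k:ℝ) - c)| ≤ 3 ∧
    |Ep n (fun k => ((k:ℝ) - c) ^ 2) - σ ^ 2| ≤ 2 * σ + 4 := by
  obtain ⟨N, hNdef⟩ : ∃ N : ℕ, N = n ^ 4 := ⟨_, rfl⟩
  have hn' : (2:ℝ) ≤ n := by exact_mod_cast hn
  have hNn : n ≤ N := by rw [hNdef]; exact Nat.le_self_pow (by norm_num) n
  have hN0 : 0 < N := by omega
  have hNr : (N:ℝ) = (n:ℝ)^4 := by rw [hNdef]; push_cast; ring
  have hN2 : (2:ℝ) ≤ N := by exact_mod_cast hn.trans hNn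
  have : Nonempty (Fin N) := ⟨⟨0, hN0⟩⟩
  have hNp : (0:ℝ) < N := by linarith
  set c : ℝ := n * ((N - 1) / 2) / N with hc
  set σ : ℝ := Real.sqrt (n * (1 - 1 / (N:ℝ)^2) / 12) with hσ
  have hq : 1 / (N:ℝ)^2 ≤ 1/4 := by
    rw [div_le_div_iff₀ (by positivity) (by norm_num)]; nlinarith
  have hq0 : 0 ≤ 1 / (N:ℝ)^2 := by positivity
  have hσ2 : σ ^ 2 = n * (1 - 1 / (N:ℝ)^2) / 12 := by
    rw [hσ, Real.sq_sqrt]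
    apply div_nonneg (mul_nonneg (by linarith) (by linarith)) (by norm_num)
  have hσlow : (n:ℝ) / 24 ≤ σ ^ 2 := by rw [hσ2]; nlinarith
  have hσup : σ ^ 2 ≤ n := by rw [hσ2]; nlinarith
  have hσpos : 0 < σ := by
    rw [hσ]; apply Real.sqrt_pos.mpr; rw [hσ2] at hσlow; linarith
  set X : Fin N → ℝ := fun v => ((v:ℝ) - (N - 1) / 2) / (N * σ) with hX
  have hB : (0:ℝ) < N * σ := by positivity
  have hX0 : ∑ v, X v = 0 := by
    simp only [hX]
    rw [← Finset.sum_div, Finset.sum_sub_distrib, sum_fin_id]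
    simp; left; ring
  have hV : (Fintype.card (Fin n) : ℝ) * ∑ v, X v ^ 2 = Fintype.card (Fin N) := by
    have e : ∑ v : Fin N, ((v:ℝ) - (N - 1) / 2)^2 = (N:ℝ) * ((N:ℝ)^2 - 1) / 12 := by
      simp only [sub_sq, Finset.sum_add_distrib, Finset.sum_sub_distrib, sum_fin_sq, ← Finset.sum_mul, ← Finset.mul_sum, sum_fin_id]
      simp; ring
    simp only [hX, div_pow]
    rw [← Finset.sum_div, e, mul_pow, hσ2, Fintype.card_fin, Fintype.card_fin]
    have h1 : (N:ℝ)^2 - 1 ≠ 0 := by nlinarith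
    have h2 : (1 - 1 / (N:ℝ)^2) = ((N:ℝ)^2 - 1) / (N:ℝ)^2 := by field_simp
    rw [h2]
    field_simp
  have hδ : ∀ v, |X v| ≤ 1 / (2 * σ) := by
    intro v
    have hv : ((v:ℕ):ℝ) + 1 ≤ N := by exact_mod_cast v.2
    have hv0 : (0:ℝ) ≤ ((v:ℕ):ℝ) := by positivity
    simp only [hX]
    rw [abs_div, abs_of_pos hB, div_le_div_iff₀ hB (by positivity)]
    have : |((v:ℕ):ℝ) - (N - 1) / 2| ≤ N / 2 := by rw [abs_le]; constructor <;> linarith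
    nlinarith
  have hWid : ∀ u : Fin n → Fin N, ((∑ i, (u i : ℕ) : ℕ) : ℝ) / N = c + σ * ∑ j, X (u j) := by
    intro u
    simp only [hX, hc]
    rw [← Finset.sum_div, Finset.sum_sub_distrib]
    push_cast
    simp
    field_simp
    ring
  have hΩ : (Fintype.card (Fin n → Fin N) : ℝ) = (N:ℝ)^n := by simp
  have hΩ0 : (0:ℝ) < (N:ℝ)^n := by positivity
  have hfl : ∀ u : Fin n → Fin N, (((∑ i, (u i : ℕ)) / N : ℕ) : ℝ) ≤ c + σ * ∑ j, X (u j) ∧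
      c + σ * ∑ j, X (u j) ≤ (((∑ i, (u i : ℕ)) / N : ℕ) : ℝ) + 1 := by
    intro u
    rw [← hWid]
    refine ⟨Nat.cast_div_le, ?_⟩
    rw [div_le_iff₀ hNp]
    have := Nat.lt_div_mul_add hN0 (a := ∑ i, (u i : ℕ))
    have h2 : (∑ i, (u i : ℕ)) ≤ ((∑ i, (u i : ℕ)) / N + 1) * N := by rw [add_mul]; omega
    exact_mod_cast h2
  have hS1 : ∑ u : Fin n → Fin N, ∑ j, X (u j) = 0 := by
    have := resample_sum (ι := Fin n) X hX0 (fun _ => 1)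
    simp only [mul_one, sub_self, mul_zero, Finset.sum_const_zero] at this
    rcases mul_eq_zero.mp this with h | h
    · simp at h; omega
    · exact h
  have hSa : ∑ u : Fin n → Fin N, |∑ j, X (u j)| ≤ (N:ℝ)^n := by
    rw [← hΩ]; exact first_abs X hX0 hV
  have hS2 : ∑ u : Fin n → Fin N, (∑ j, X (u j)) ^ 2 = (N:ℝ)^n := by
    have h := second_moment (ι := Fin n) X hX0
    have e : (Fintype.card (Fin n) : ℝ) * Fintype.card (Fin n → Fin N) * ∑ v, X v ^ 2 =
      Fintype.card (Fin N) * Fintype.card (Fin n → Fin N) := by rw [← hV]; ring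
    rw [e] at h
    rw [← hΩ]
    exact mul_left_cancel₀ (by simp; omega) h
  have hc0 : 0 ≤ c := by
    rw [hc]; apply div_nonneg _ hNp.le; apply mul_nonneg <;> linarith
  have hcn : c ≤ n := by
    rw [hc, div_le_iff₀ hNp]; nlinarith
  have hkc : ∀ k ≤ n, |(k:ℝ) - c| ≤ n := by
    intro k hk
    have : (k:ℝ) ≤ n := by exact_mod_cast hk
    have : (0:ℝ) ≤ k := by positivity
    rw [abs_le]; constructor <;> linarith
  refine ⟨c, σ, hσpos, hσlow, hσup, ?_, ?_, ?_⟩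
  · intro y
    have h1 := Ep_Ew hNn hN0 (fun k => if (k:ℝ) ≤ y then (1:ℝ) else 0) 1 (by
      intro k _; split_ifs <;> simp)
    have h2 : 2 * 1 * (n:ℝ)^2 / N ≤ 2 / σ := by
      rw [div_le_div_iff₀ hNp hσpos, hNr]
      have h4 : σ ≤ n := by
        by_contra h; push Not at h; nlinarith
      have : σ ≤ (n:ℝ)^2 := by nlinarith
      have h0 : (0:ℝ) ≤ (n:ℝ)^2 := by positivity
      nlinarith
    have key : ∀ z, |(∑ u : Fin n → Fin N, if c + σ * ∑ j, X (u j) ≤ z then (1:ℝ) else 0) / (N:ℝ)^n -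
        stdNormalCDF ((z - c)/σ)| ≤ 12 / σ := by
      intro z
      have := BE_iid (ι := Fin n) X hX0 hV _ hδ ((z - c)/σ)
      rw [hΩ] at this
      have e : 24 * (1 / (2 * σ)) = 12 / σ := by field_simp; norm_num
      rw [e] at this
      have e2 : ∀ u : Fin n → Fin N, (c + σ * ∑ j, X (u j) ≤ z) ↔ ∑ j, X (u j) ≤ (z - c) / σ := by
        intro u
        rw [le_div_iff₀ hσpos]; constructor <;> intro h <;> linarith
      simp only [e2]
      exact this
    have k1 := (abs_le.mp (key y)).1
    have k2 := (abs_le.mp (key (y+1))).2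
    have l := Phi_lip ((y + 1 - c)/σ) ((y - c)/σ)
    have e3 : (y + 1 - c)/σ - (y - c)/σ = 1 / σ := by field_simp; ring
    rw [e3, abs_of_pos (show (0:ℝ) < 1 / σ by positivity)] at l
    have l := (abs_le.mp l).2
    have m1 : (∑ u : Fin n → Fin N, if c + σ * ∑ j, X (u j) ≤ y then (1:ℝ) else 0) / (N:ℝ)^n ≤
        Ew n N (fun k => if (k:ℝ) ≤ y then (1:ℝ) else 0) := by
      unfold Ew
      refine div_le_div_of_nonneg_right (Finset.sum_le_sum fun u _ => ?_) hΩ0.le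
      exact ind_mono fun h => (hfl u).1.trans h
    have m2 : Ew n N (fun k => if (k:ℝ) ≤ y then (1:ℝ) else 0) ≤ 
        (∑ u : Fin n → Fin N, if c + σ * ∑ j, X (u j) ≤ y + 1 then (1:ℝ) else 0) / (N:ℝ)^n := by
      unfold Ew
      refine div_le_div_of_nonneg_right (Finset.sum_le_sum fun u _ => ?_) hΩ0.le
      exact ind_mono fun h => (hfl u).2.trans (by linarith)
    have h1 := abs_le.mp (h1.trans h2)
    have f1 : 15 / σ = 12 / σ + 2 / σ + 1 / σ := by ring
    have f2 : 0 < 1 / σ := by positivity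
    rw [abs_le, f1]
    constructor <;> linarith [h1.1, h1.2]
  · have h1 := Ep_Ew hNn hN0 (fun k => (k:ℝ) - c) n hkc
    have h2 : 2 * n * (n:ℝ)^2 / N ≤ 2 := by
      rw [div_le_iff₀ hNp, hNr]; nlinarith [pow_pos (by linarith : (0:ℝ) < n) 3]
    have h3 : |Ew n N (fun k => (k:ℝ) - c)| ≤ 1 := by
      unfold Ew
      rw [abs_div, abs_of_pos hΩ0, div_le_iff₀ hΩ0]
      have : ∑ u : Fin n → Fin N, ((((∑ i, (u i : ℕ)) / N : ℕ) : ℝ) - c) =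
        ∑ u : Fin n → Fin N, ((((∑ i, (u i : ℕ)) / N : ℕ) : ℝ) - c - σ * ∑ j, X (u j)) := by
        rw [Finset.sum_sub_distrib (f := fun u : Fin n → Fin N => ((((∑ i, (u i : ℕ)) / N : ℕ) : ℝ) - c)), ← Finset.mul_sum, hS1]; ring
      rw [this]
      refine (Finset.abs_sum_le_sum_abs _ _).trans ?_
      refine (Finset.sum_le_card_nsmul _ _ 1 fun u _ => ?_).trans ?_
      · have := hfl u
        rw [abs_le]; constructor <;> linarith [this.1, this.2]
      · rw [Finset.card_univ, nsmul_eq_mul, hΩ]; linarith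
    have h1 := abs_le.mp (h1.trans h2)
    have h3 := abs_le.mp h3
    rw [abs_le]; constructor <;> linarith [h1.1, h1.2, h3.1, h3.2]
  · have h1 := Ep_Ew hNn hN0 (fun k => ((k:ℝ) - c)^2) ((n:ℝ)^2) (by
      intro k hk
      rw [abs_pow]; exact pow_le_pow_left₀ (abs_nonneg _) (hkc k hk) 2)
    have h2 : 2 * (n:ℝ)^2 * (n:ℝ)^2 / N ≤ 2 := by
      rw [div_le_iff₀ hNp, hNr]; apply le_of_eq; ring
    have h3 : |Ew n N (fun k => ((k:ℝ) - c)^2) - σ^2| ≤ 2 * σ + 1 := by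
      unfold Ew
      rw [div_sub' hΩ0.ne', abs_div, abs_of_pos hΩ0, div_le_iff₀ hΩ0]
      have e : (N:ℝ)^n * σ^2 = ∑ u : Fin n → Fin N, (σ * ∑ j, X (u j))^2 := by
        simp only [mul_pow]; rw [← Finset.mul_sum, hS2]; ring
      rw [e, ← Finset.sum_sub_distrib]
      refine (Finset.abs_sum_le_sum_abs _ _).trans ?_
      have : ∀ u : Fin n → Fin N, |((((∑ i, (u i : ℕ)) / N : ℕ) : ℝ) - c)^2 - (σ * ∑ j, X (u j))^2| ≤
          2 * σ * |∑ j, X (u j)| + 1 := by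
        intro u
        have h := hfl u
        set a := (((∑ i, (u i : ℕ)) / N : ℕ) : ℝ) - c
        set b := σ * ∑ j, X (u j) with hb
        have e1 : 2 * σ * |∑ j, X (u j)| = 2 * |b| := by rw [hb, abs_mul, abs_of_pos hσpos]; ring
        rw [e1]
        have e2 : a^2 - b^2 = (a-b)^2 + 2 * b * (a - b) := by ring
        have e3 : |a - b| ≤ 1 := by rw [abs_le]; constructor <;> linarith [h.1, h.2]
        rw [e2]
        calc _ ≤ |(a-b)^2| + |2 * b * (a-b)| := abs_add_le _ _
          _ = |a-b|^2 + 2 * |b| * |a-b| := by rw [abs_pow, abs_mul, abs_mul]; norm_num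
          _ ≤ 1^2 + 2 * |b| * 1 := by gcongr
          _ = _ := by ring
      refine (Finset.sum_le_sum fun u _ => this u).trans ?_
      rw [Finset.sum_add_distrib, ← Finset.mul_sum, Finset.sum_const, Finset.card_univ, nsmul_eq_mul, hΩ]
      have := mul_le_mul_of_nonneg_left hSa (show 0 ≤ 2 * σ by positivity)
      linarith
    have h1 := abs_le.mp (h1.trans h2)
    have h3 := abs_le.mp h3
    rw [abs_le]; constructor <;> linarith [h1.1, h1.2, h3.1, h3.2]
/-! From permutations to derangements -/
lemma des_agree {n : ℕ} (π ρ : Equiv.Perm (Fin n)) (B : Finset (Fin n)) (h : ∀ i, i ∉ B → π i = ρ i) :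
    descents π ≤ descents ρ + 2 * B.card := by
  have hsub : (Finset.univ.filter fun i : Fin n => ∃ h : (i : ℕ) + 1 < n, π ⟨(i : ℕ) + 1, h⟩ < π i) ⊆
      ((Finset.univ.filter fun i : Fin n => ∃ h : (i : ℕ) + 1 < n, ρ ⟨(i : ℕ) + 1, h⟩ < ρ i) ∪ B) ∪
        (Finset.univ.filter fun i : Fin n => ∃ h : (i : ℕ) + 1 < n, (⟨(i : ℕ) + 1, h⟩ : Fin n) ∈ B) := by
    intro i hi
    simp only [mem_filter, mem_univ, true_and] at hi
    obtain ⟨hi1, hi2⟩ := hi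
    simp only [mem_union, mem_filter, mem_univ, true_and]
    by_cases h1 : i ∈ B
    · exact Or.inl (Or.inr h1)
    · by_cases h2 : (⟨(i : ℕ) + 1, hi1⟩ : Fin n) ∈ B
      · exact Or.inr ⟨hi1, h2⟩
      · left; left
        exact ⟨hi1, by rw [← h _ h1, ← h _ h2]; exact hi2⟩
  have hc : (Finset.univ.filter fun i : Fin n => ∃ h : (i : ℕ) + 1 < n, (⟨(i : ℕ) + 1, h⟩ : Fin n) ∈ B).card ≤ B.card := by
    refine Finset.card_le_card_of_injOn (fun i => if h : (i : ℕ) + 1 < n then ⟨(i : ℕ) + 1, h⟩ else i) ?_ ?_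
    · intro i hi
      simp only [coe_filter, mem_univ, true_and, Set.mem_ofPred_eq] at hi
      obtain ⟨h1, h2⟩ := hi
      simpa [h1] using h2
    · intro i hi j hj hij
      simp only [coe_filter, mem_univ, true_and, Set.mem_ofPred_eq] at hi hj
      obtain ⟨h1, h2⟩ := hi
      obtain ⟨h3, h4⟩ := hj
      simp only [h1, h3, dif_pos, Fin.mk.injEq] at hij
      exact Fin.ext (by omega)
  have := (Finset.card_le_card hsub).trans ((Finset.card_union_le _ _).trans (Nat.add_le_add_right (Finset.card_union_le _ _) _))
  unfold descents
  omega

lemma des_tau {n : ℕ} (a : Fin n) (π : Equiv.Perm (Fin n)) :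
    |(descents (Equiv.swap a (π a) * π) : ℝ) - descents π| ≤ 4 := by
  have hag : ∀ i, i ∉ ({a, π.symm a} : Finset (Fin n)) → (Equiv.swap a (π a) * π) i = π i := by
    intro i hi
    simp only [mem_insert, mem_singleton, not_or] at hi
    rw [Equiv.Perm.mul_apply, Equiv.swap_apply_of_ne_of_ne]
    · intro h; exact hi.2 (by rw [← h]; simp)
    · intro h; exact hi.1 (π.injective h)
  have hc : ({a, π.symm a} : Finset (Fin n)).card ≤ 2 := Finset.card_le_two
  have h1 := des_agree _ _ _ hag
  have h2 := des_agree _ _ _ (fun i hi => (hag i hi).symm)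
  have h1' : descents (Equiv.swap a (π a) * π) ≤ descents π + 4 := by omega
  have h2' : descents π ≤ descents (Equiv.swap a (π a) * π) + 4 := by omega
  have h1r : (descents (Equiv.swap a (π a) * π) : ℝ) ≤ descents π + 4 := by exact_mod_cast h1'
  have h2r : (descents π : ℝ) ≤ descents (Equiv.swap a (π a) * π) + 4 := by exact_mod_cast h2'
  rw [abs_le]; constructor <;> linarith

/-- permutations fixing `A` pointwise -/
def stabS {n : ℕ} (A : Finset (Fin n)) : Finset (Equiv.Perm (Fin n)) :=
  Finset.univ.filter fun ρ => ∀ b ∈ A, ρ b = b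

lemma stab_step {n : ℕ} (A : Finset (Fin n)) (a : Fin n) (ha : a ∉ A) (G : Equiv.Perm (Fin n) → ℝ) :
    ∑ ρ ∈ stabS A, G (Equiv.swap a (ρ a) * ρ) = ((n - A.card : ℕ) : ℝ) * ∑ ρ ∈ stabS (insert a A), G ρ := by
  have e : ((n - A.card : ℕ) : ℝ) * ∑ ρ ∈ stabS (insert a A), G ρ =
      ∑ p ∈ stabS (insert a A) ×ˢ Aᶜ, G p.1 := by
    rw [Finset.sum_product]
    simp only [Finset.sum_const, Finset.card_compl, Fintype.card_fin, nsmul_eq_mul, ← Finset.mul_sum]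
  rw [e]
  refine Finset.sum_bij' (fun ρ _ => (Equiv.swap a (ρ a) * ρ, ρ a)) (fun p _ => Equiv.swap a p.2 * p.1) ?_ ?_ ?_ ?_ ?_
  · intro ρ hρ
    simp only [stabS, mem_filter, mem_univ, true_and] at hρ
    have hra : ρ a ∉ A := by
      intro h
      have := hρ _ h
      exact ha (by rw [ρ.injective this] at h; exact h)
    simp only [stabS, mem_product, mem_filter, mem_univ, true_and, mem_compl, mem_insert, forall_eq_or_imp]
    refine ⟨⟨by simp, ?_⟩, hra⟩
    intro b hb
    rw [Equiv.Perm.mul_apply, hρ b hb, Equiv.swap_apply_of_ne_of_ne]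
    · rintro rfl; exact ha hb
    · rintro rfl; exact hra hb
  · rintro ⟨ρ, c⟩ h
    simp only [stabS, mem_product, mem_filter, mem_univ, true_and, mem_compl, mem_insert, forall_eq_or_imp] at h ⊢
    intro b hb
    rw [Equiv.Perm.mul_apply, h.1.2 b hb, Equiv.swap_apply_of_ne_of_ne]
    · rintro rfl; exact ha hb
    · rintro rfl; exact h.2 hb
  · intro ρ _
    simp
  · rintro ⟨ρ, c⟩ h
    simp only [stabS, mem_product, mem_filter, mem_univ, true_and, mem_compl, mem_insert, forall_eq_or_imp] at h
    simp [h.1.1]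
  · intro ρ _; rfl

lemma stab_couple {n : ℕ} (A : Finset (Fin n)) : ∃ T : Equiv.Perm (Fin n) → Equiv.Perm (Fin n),
    (∀ π, |(descents (T π) : ℝ) - descents π| ≤ 4 * A.card) ∧
    ∀ G : Equiv.Perm (Fin n) → ℝ, ∑ π, G (T π) = (n.descFactorial A.card : ℝ) * ∑ ρ ∈ stabS A, G ρ := by
  induction A using Finset.induction_on with
  | empty => exact ⟨id, by simp, fun G => by simp [stabS]⟩
  | insert a A ha ih =>
    obtain ⟨T, h1, h2⟩ := ih
    refine ⟨fun π => Equiv.swap a (T π a) * T π, fun π => ?_, fun G => ?_⟩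
    · have := abs_le.mp (des_tau a (T π))
      have h := abs_le.mp (h1 π)
      rw [Finset.card_insert_of_notMem ha, abs_le]
      push_cast
      constructor <;> linarith [this.1, this.2, h.1, h.2]
    · rw [h2 (fun ρ => G (Equiv.swap a (ρ a) * ρ)), stab_step A a ha G, Finset.card_insert_of_notMem ha,
        Nat.descFactorial_succ]
      push_cast; ring

lemma incl_excl {n : ℕ} (G : Equiv.Perm (Fin n) → ℝ) :
    ∑ π ∈ derangementSet n, G π = ∑ A : Finset (Fin n), (-1 : ℝ) ^ A.card * ∑ ρ ∈ stabS A, G ρ := by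
  have h1 : ∀ π : Equiv.Perm (Fin n), (if ∀ i, π i ≠ i then (1:ℝ) else 0) =
      ∑ A : Finset (Fin n), (-1 : ℝ) ^ A.card * (if ∀ b ∈ A, π b = b then 1 else 0) := by
    intro π
    have h2 : (if ∀ i, π i ≠ i then (1:ℝ) else 0) = ∏ i : Fin n, (-(if π i = i then (1:ℝ) else 0) + 1) := by
      split_ifs with h
      · symm; apply Finset.prod_eq_one; intro i _; simp [h i]
      · push Not at h
        obtain ⟨i, hi⟩ := h
        symm; apply Finset.prod_eq_zero (Finset.mem_univ i); simp [hi]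
    rw [h2, Finset.prod_add, Finset.powerset_univ]
    refine Finset.sum_congr rfl fun A _ => ?_
    rw [Finset.prod_const_one, mul_one, Finset.prod_neg]
    congr 1
    rw [Finset.prod_ite_zero]
    simp
  unfold derangementSet stabS
  simp only [Finset.sum_filter]
  have h3 : ∀ π : Equiv.Perm (Fin n), (if ∀ i, π i ≠ i then G π else 0) =
      ∑ A : Finset (Fin n), (-1 : ℝ) ^ A.card * (if ∀ b ∈ A, π b = b then G π else 0) := by
    intro π
    have : (if ∀ i, π i ≠ i then G π else 0) = (if ∀ i, π i ≠ i then (1:ℝ) else 0) * G π := by split_ifs <;> simp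
    rw [this, h1 π, Finset.sum_mul]
    refine Finset.sum_congr rfl fun A _ => ?_
    split_ifs <;> simp
  rw [Finset.sum_congr rfl fun π _ => h3 π, Finset.sum_comm]
  simp only [Finset.mul_sum]

lemma numDer_lower (n : ℕ) : (n + 2).factorial ≤ 3 * numDerangements (n + 2) ∧
    (n + 3).factorial ≤ 3 * numDerangements (n + 3) := by
  induction n with
  | zero => decide
  | succ n ih =>
    refine ⟨ih.2, ?_⟩
    have h : numDerangements (n + 1 + 3) = (n + 3) * (numDerangements (n + 2) + numDerangements (n + 3)) :=
      numDerangements_add_two (n + 2)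
    rw [h]
    have e : (n + 1 + 3).factorial = (n + 3) * ((n+2).factorial + (n + 3).factorial) := by
      simp only [Nat.factorial_succ]; ring
    rw [e]
    nlinarith [ih.1, ih.2]

lemma derSet_card (n : ℕ) : (derangementSet n).card = numDerangements n := by
  rw [← card_derangements_fin_eq_numDerangements, derangementSet, ← Fintype.card_subtype]
  refine Fintype.card_congr (Equiv.subtypeEquivRight fun π => ?_)
  rfl

lemma derSet_lower (n : ℕ) (hn : 2 ≤ n) : (n.factorial : ℝ) ≤ 3 * (derangementSet n).card := by
  obtain ⟨m, rfl⟩ := Nat.exists_eq_add_of_le' hn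
  rw [derSet_card]
  exact_mod_cast (numDer_lower m).1

lemma sq_le_two_pow (j : ℕ) : ((1:ℝ) + j)^2 ≤ 4 * 2 ^ j := by
  have h1 : ∀ j : ℕ, 4 ≤ j → (1 + j)^2 ≤ 4 * 2 ^ j := by
    intro j hj
    induction j, hj using Nat.le_induction with
    | base => norm_num
    | succ k hk ih => rw [pow_succ 2 k]; nlinarith
  have h2 : (1 + j)^2 ≤ 4 * 2 ^ j := by
    by_cases h : 4 ≤ j
    · exact h1 j h
    · interval_cases j <;> norm_num
  exact_mod_cast h2

/-- average over derangements -/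
noncomputable def Ed (n : ℕ) (g : ℕ → ℝ) : ℝ :=
  (∑ π ∈ derangementSet n, g (descents π)) / (derangementSet n).card

lemma weight_sum (n : ℕ) : ∑ A : Finset (Fin n), ((n - A.card).factorial : ℝ) * ((1:ℝ) + A.card)^2 ≤
    n.factorial * 36 := by
  rw [← Finset.powerset_univ,
    Finset.sum_powerset_apply_card (fun m => ((n - m).factorial : ℝ) * ((1:ℝ) + m)^2)]
  rw [Finset.card_univ, Fintype.card_fin]
  have h1 : ∀ m ∈ range (n + 1), n.choose m • (((n - m).factorial : ℝ) * ((1:ℝ) + m)^2) ≤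
      n.factorial * (4 * (2 ^ m / m.factorial)) := by
    intro m hm
    have hm' : m ≤ n := by simp at hm; omega
    have h := Nat.choose_mul_factorial_mul_factorial hm'
    have hmf : (0:ℝ) < m.factorial := by exact_mod_cast Nat.factorial_pos m
    rw [nsmul_eq_mul, ← h]
    push_cast
    have e : (n.choose m : ℝ) * m.factorial * (n - m).factorial * (4 * (2 ^ m / m.factorial)) =
      n.choose m * ((n - m).factorial * (4 * 2 ^ m)) := by field_simp
    rw [e]
    gcongr
    exact sq_le_two_pow m
  refine (Finset.sum_le_sum h1).trans ?_
  rw [← Finset.mul_sum, ← Finset.mul_sum]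
  have h2 := Real.sum_le_exp_of_nonneg (x := 2) (by norm_num) (n + 1)
  have h3 : Real.exp 2 ≤ 9 := by
    have := Real.exp_one_lt_d9
    have e : Real.exp 2 = Real.exp 1 * Real.exp 1 := by rw [← Real.exp_add]; norm_num
    rw [e]
    have := Real.exp_pos 1
    nlinarith
  gcongr
  linarith

lemma Ed_Ep (n : ℕ) (hn : 2 ≤ n) (g : ℕ → ℝ) (Q : ℝ)
    (hQ : ∀ (j : ℕ) (T : Equiv.Perm (Fin n) → Equiv.Perm (Fin n)),
      (∀ π, |(descents (T π) : ℝ) - descents π| ≤ 4 * j) →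
      ∑ π, |g (descents (T π)) - g (descents π)| ≤ n.factorial * (((1:ℝ) + j)^2 * Q)) :
    |Ed n g - Ep n g| ≤ 108 * Q := by
  have hnf : (0:ℝ) < (n.factorial : ℝ) := by exact_mod_cast Nat.factorial_pos n
  have hQ0 : 0 ≤ Q := by
    have := hQ 0 id (by simp)
    simp at this
    exact (mul_nonneg_iff_of_pos_left hnf).mp this
  have hd := derSet_lower n hn
  have hdp : (0:ℝ) < (derangementSet n).card := by linarith
  have key : ∀ A : Finset (Fin n), |∑ ρ ∈ stabS A, (g (descents ρ) - Ep n g)| ≤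
      ((n - A.card).factorial : ℝ) * ((1:ℝ) + A.card)^2 * Q := by
    intro A
    obtain ⟨T, h1, h2⟩ := stab_couple A
    have hA : A.card ≤ n := by simpa using Finset.card_le_univ A
    have hf : ((n - A.card).factorial : ℝ) * n.descFactorial A.card = n.factorial := by
      exact_mod_cast Nat.factorial_mul_descFactorial hA
    have hD : (0:ℝ) < n.descFactorial A.card := by
      exact_mod_cast Nat.descFactorial_pos.mpr hA
    have h3 := h2 (fun ρ => g (descents ρ) - Ep n g)
    have h4 : ∑ π : Equiv.Perm (Fin n), (g (descents (T π)) - Ep n g) =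
        ∑ π : Equiv.Perm (Fin n), (g (descents (T π)) - g (descents π)) := by
      rw [Finset.sum_sub_distrib, Finset.sum_sub_distrib, Finset.sum_const, Finset.card_univ,
        Fintype.card_perm, Fintype.card_fin, nsmul_eq_mul]
      congr 1
      unfold Ep; field_simp
    have h5 : (n.descFactorial A.card : ℝ) * |∑ ρ ∈ stabS A, (g (descents ρ) - Ep n g)| ≤
        n.factorial * (((1:ℝ) + A.card)^2 * Q) := by
      rw [← abs_of_pos hD, ← abs_mul, ← h3, h4]
      exact (Finset.abs_sum_le_sum_abs _ _).trans (hQ _ T h1)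
    rw [← hf] at h5
    refine le_of_mul_le_mul_left (h5.trans (le_of_eq ?_)) hD
    ring
  have e : Ed n g - Ep n g = (∑ π ∈ derangementSet n, (g (descents π) - Ep n g)) / (derangementSet n).card := by
    unfold Ed
    rw [Finset.sum_sub_distrib, Finset.sum_const, nsmul_eq_mul]
    field_simp
  rw [e, incl_excl, abs_div, abs_of_pos hdp, div_le_iff₀ hdp]
  calc _ ≤ ∑ A : Finset (Fin n), |(-1 : ℝ) ^ A.card * ∑ ρ ∈ stabS A, (g (descents ρ) - Ep n g)| :=
        Finset.abs_sum_le_sum_abs _ _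
    _ ≤ ∑ A : Finset (Fin n), ((n - A.card).factorial : ℝ) * ((1:ℝ) + A.card)^2 * Q := by
        refine Finset.sum_le_sum fun A _ => ?_
        rw [abs_mul, abs_pow, abs_neg, abs_one, one_pow, one_mul]
        exact key A
    _ ≤ n.factorial * 36 * Q := by
        rw [← Finset.sum_mul]
        exact mul_le_mul_of_nonneg_right (weight_sum n) hQ0
    _ ≤ _ := by nlinarith
/-! Final assembly -/
lemma sum_perm_eq (n : ℕ) (g : ℕ → ℝ) : ∑ π : Equiv.Perm (Fin n), g (descents π) = n.factorial * Ep n g := by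
  have hnf : (0:ℝ) < (n.factorial : ℝ) := by exact_mod_cast Nat.factorial_pos n
  unfold Ep; field_simp

lemma sum_perm_const (n : ℕ) (a : ℝ) : ∑ _π : Equiv.Perm (Fin n), a = n.factorial * a := by
  simp [Fintype.card_perm]

lemma Ed_mean (n : ℕ) (hn : 2 ≤ n) (c : ℝ) :
    |Ed n (fun k => (k:ℝ) - c) - Ep n (fun k => (k:ℝ) - c)| ≤ 108 * 4 := by
  refine Ed_Ep n hn _ _ fun j T hT => ?_
  rw [← sum_perm_const]
  refine Finset.sum_le_sum fun π _ => ?_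
  have h := hT π
  have e : ((descents (T π) : ℝ) - c) - ((descents π : ℝ) - c) = (descents (T π) : ℝ) - descents π := by ring
  rw [e]
  have hj : (0:ℝ) ≤ j := by positivity
  nlinarith

lemma Ed_second (n : ℕ) (hn : 2 ≤ n) (c σ : ℝ) (hσ : 2/5 ≤ σ)
    (h2 : |Ep n (fun k => ((k:ℝ) - c) ^ 2) - σ ^ 2| ≤ 2 * σ + 4) :
    |Ed n (fun k => ((k:ℝ) - c)^2) - Ep n (fun k => ((k:ℝ) - c)^2)| ≤ 108 * (8 * σ + 64) := by
  have hnf : (0:ℝ) < (n.factorial : ℝ) := by exact_mod_cast Nat.factorial_pos n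
  have habs : ∑ π : Equiv.Perm (Fin n), |(descents π : ℝ) - c| ≤ n.factorial * (σ + 6) := by
    have h3 : ∀ π : Equiv.Perm (Fin n), |(descents π : ℝ) - c| ≤ σ / 2 + ((descents π : ℝ) - c)^2 * (1 / (2 * σ)) := by
      intro π
      have hs : 0 < σ := by linarith
      have e : σ / 2 + ((descents π : ℝ) - c)^2 * (1 / (2 * σ)) = (σ^2 + ((descents π : ℝ) - c)^2) / (2 * σ) := by
        field_simp
      rw [e, le_div_iff₀ (by positivity), ← sq_abs ((descents π : ℝ) - c)]
      nlinarith [sq_nonneg (|(descents π : ℝ) - c| - σ)]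
    refine (Finset.sum_le_sum fun π _ => h3 π).trans ?_
    rw [Finset.sum_add_distrib, sum_perm_const, ← Finset.sum_mul, sum_perm_eq n (fun k => ((k:ℝ) - c)^2)]
    have h4 := (abs_le.mp h2).2
    have hs : 0 < σ := by linarith
    have h5 : Ep n (fun k => ((k:ℝ) - c) ^ 2) * (1 / (2 * σ)) ≤ σ / 2 + 6 := by
      rw [mul_one_div, div_le_iff₀ (by positivity)]
      nlinarith
    calc _ = n.factorial * (σ / 2 + Ep n (fun k => ((k:ℝ) - c) ^ 2) * (1 / (2 * σ))) := by ring
      _ ≤ _ := by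
        refine mul_le_mul_of_nonneg_left ?_ hnf.le
        linarith
  refine Ed_Ep n hn _ _ fun j T hT => ?_
  have hj : (0:ℝ) ≤ j := by positivity
  have h6 : ∀ π : Equiv.Perm (Fin n), |((descents (T π) : ℝ) - c)^2 - ((descents π : ℝ) - c)^2| ≤
      8 * j * |(descents π : ℝ) - c| + 16 * (j:ℝ)^2 := by
    intro π
    have h := hT π
    set a := (descents (T π) : ℝ) - descents π with ha
    set b := (descents π : ℝ) - c with hb
    have e : ((descents (T π) : ℝ) - c)^2 - b^2 = a^2 + 2 * b * a := by rw [ha, hb]; ring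
    rw [e]
    calc _ ≤ |a^2| + |2 * b * a| := abs_add_le _ _
      _ = |a|^2 + 2 * |b| * |a| := by rw [abs_pow, abs_mul, abs_mul]; norm_num
      _ ≤ (4*j)^2 + 2 * |b| * (4 * j) := by gcongr
      _ = _ := by ring
  refine (Finset.sum_le_sum fun π _ => h6 π).trans ?_
  rw [Finset.sum_add_distrib, sum_perm_const, ← Finset.mul_sum]
  have h7 := mul_le_mul_of_nonneg_left habs (show (0:ℝ) ≤ 8 * j by positivity)
  have h8 : 8 * j * (σ + 6) + 16 * (j:ℝ)^2 ≤ (1 + (j:ℝ))^2 * (8 * σ + 64) := by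
    have : 0 ≤ (j:ℝ) * σ := by positivity
    have : 0 ≤ (j:ℝ)^2 * σ := by positivity
    nlinarith
  have h9 := mul_le_mul_of_nonneg_left h8 hnf.le
  linarith

lemma Ed_cdf (n : ℕ) (hn : 2 ≤ n) (c σ : ℝ) (hσ : 0 < σ)
    (h : ∀ y : ℝ, |Ep n (fun k => if (k:ℝ) ≤ y then 1 else 0) - stdNormalCDF ((y - c) / σ)| ≤ 15 / σ) (y : ℝ) :
    |Ed n (fun k => if (k:ℝ) ≤ y then 1 else 0) - stdNormalCDF ((y - c) / σ)| ≤ 3255 / σ := by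
  have hnf : (0:ℝ) < (n.factorial : ℝ) := by exact_mod_cast Nat.factorial_pos n
  have key : |Ed n (fun k => if (k:ℝ) ≤ y then 1 else 0) - Ep n (fun k => if (k:ℝ) ≤ y then 1 else 0)| ≤ 108 * (30 / σ) := by
    refine Ed_Ep n hn _ _ fun j T hT => ?_
    have hj : (0:ℝ) ≤ j := by positivity
    have h1 : ∀ π : Equiv.Perm (Fin n), |(if (descents (T π) : ℝ) ≤ y then (1:ℝ) else 0) - (if (descents π : ℝ) ≤ y then (1:ℝ) else 0)| ≤
        (if (descents π : ℝ) ≤ y + 4 * j then (1:ℝ) else 0) - (if (descents π : ℝ) ≤ y - 4 * j then (1:ℝ) else 0) := by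
      intro π
      have := abs_le.mp (hT π)
      split_ifs <;> first | (exfalso; linarith [this.1, this.2]) | norm_num
    refine (Finset.sum_le_sum fun π _ => h1 π).trans ?_
    rw [Finset.sum_sub_distrib, sum_perm_eq n (fun k => if (k:ℝ) ≤ y + 4 * j then (1:ℝ) else 0),
      sum_perm_eq n (fun k => if (k:ℝ) ≤ y - 4 * j then (1:ℝ) else 0), ← mul_sub]
    refine mul_le_mul_of_nonneg_left ?_ hnf.le
    have a := (abs_le.mp (h (y + 4 * j))).2
    have b := (abs_le.mp (h (y - 4 * j))).1
    have l := (le_abs_self _).trans (Phi_lip ((y + 4 * j - c)/σ) ((y - 4 * j - c)/σ))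
    have e3 : (y + 4 * j - c)/σ - (y - 4 * j - c)/σ = (8 * j) / σ := by field_simp; ring
    rw [e3, abs_of_nonneg (show 0 ≤ (8 * (j:ℝ)) / σ by positivity)] at l
    have e4 : (1 + (j:ℝ))^2 * (30 / σ) = (30 * (1 + (j:ℝ))^2) / σ := by ring
    have e5 : (30 + 8 * j) / σ ≤ (30 * (1 + (j:ℝ))^2) / σ := by
      gcongr; nlinarith
    have e6 : (30 + 8 * (j:ℝ)) / σ = 15 / σ + 15 / σ + (8 * j) / σ := by ring
    rw [e4]; linarith
  have a := abs_le.mp key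
  have b := abs_le.mp (h y)
  have e : 3255 / σ = 108 * (30 / σ) + 15 / σ := by ring
  rw [abs_le, e]
  constructor <;> linarith [a.1, a.2, b.1, b.2]

lemma final_sigma (n : ℕ) (hn : 4 ≤ n) : ∃ σ : ℝ, 0 < σ ∧ (n:ℝ) / 24 ≤ σ ^ 2 ∧ ∀ x : ℝ,
    |derCDF n x - stdNormalCDF x| ≤ 2100000 / σ := by
  have hn' : (4:ℝ) ≤ n := by exact_mod_cast hn
  obtain ⟨c, σ, hσ, hlow, -, hcdf, hmean, hsec⟩ := perm_clt n (by omega)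
  have hσ' : 2/5 ≤ σ := by nlinarith
  refine ⟨σ, hσ, hlow, fun x => ?_⟩
  have hd := derSet_lower n (by omega)
  have hnf : (0:ℝ) < (n.factorial : ℝ) := by exact_mod_cast Nat.factorial_pos n
  have hdp : (0:ℝ) < (derangementSet n).card := by linarith
  have m1 : |derMean n - c| ≤ 435 := by
    have e : derMean n - c = Ed n (fun k => (k:ℝ) - c) := by
      unfold derMean Ed
      rw [Finset.sum_sub_distrib, Finset.sum_const, nsmul_eq_mul]
      field_simp
    rw [e]
    have a := abs_le.mp (Ed_mean n (by omega) c)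
    have b := abs_le.mp hmean
    rw [abs_le]; constructor <;> linarith [a.1, a.2, b.1, b.2]
  have v1 : |derVar n - σ^2| ≤ 500000 * σ := by
    have e : derVar n = Ed n (fun k => ((k:ℝ) - c)^2) - (derMean n - c)^2 := by
      have e1 : ∀ π : Equiv.Perm (Fin n), ((descents π : ℝ) - derMean n)^2 =
        ((descents π : ℝ) - c)^2 - 2 * (derMean n - c) * (descents π : ℝ) + 2 * (derMean n - c) * c
          + (derMean n - c)^2 := by
        intro π; ring
      have e2 : ∑ π ∈ derangementSet n, (descents π : ℝ) = derMean n * (derangementSet n).card := by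
        unfold derMean; field_simp
      unfold derVar Ed
      rw [Finset.sum_congr rfl fun π _ => e1 π, Finset.sum_add_distrib, Finset.sum_add_distrib,
        Finset.sum_sub_distrib, ← Finset.mul_sum, e2]
      simp only [Finset.sum_const, nsmul_eq_mul]
      field_simp
      ring
    have a := abs_le.mp (Ed_second n (by omega) c σ hσ' hsec)
    have b := abs_le.mp hsec
    have m2 : (derMean n - c)^2 ≤ 435^2 := by
      rw [← sq_abs]; exact pow_le_pow_left₀ (abs_nonneg _) m1 2
    have m3 := sq_nonneg (derMean n - c)
    rw [e, abs_le]
    constructor <;> linarith [a.1, a.2, b.1, b.2]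
  have p0 := Phi_nonneg x
  have p1 := Phi_le_one x
  by_cases hv : derVar n ≤ 0
  · have h1 : σ ≤ 500000 := by
      have := (abs_le.mp v1).1
      nlinarith
    have h2 : 1 ≤ 2100000 / σ := by rw [le_div_iff₀ hσ]; linarith
    have q0 : 0 ≤ derCDF n x := by unfold derCDF; positivity
    have q1 : derCDF n x ≤ 1 := by
      unfold derCDF
      rw [div_le_one hdp]
      exact_mod_cast Finset.card_filter_le _ _
    rw [abs_le]; constructor <;> linarith
  · push Not at hv
    set s := Real.sqrt (derVar n) with hs
    have hs0 : 0 < s := Real.sqrt_pos.mpr hv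
    have hs2 : s^2 = derVar n := Real.sq_sqrt hv.le
    have hcd : derCDF n x = Ed n (fun k => if (k:ℝ) ≤ derMean n + s * x then 1 else 0) := by
      unfold derCDF Ed
      rw [Finset.card_filter]
      push_cast
      congr 1
      refine Finset.sum_congr rfl fun π _ => ?_
      have : (((descents π : ℝ) - derMean n) / s ≤ x) ↔ (descents π : ℝ) ≤ derMean n + s * x := by
        rw [div_le_iff₀ hs0]; constructor <;> intro h <;> linarith
      rw [← hs]
      simp only [this]
    have h1 := Ed_cdf n (by omega) c σ hσ hcdf (derMean n + s * x)
    rw [← hcd] at h1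
    have h2 := Phi_lip ((derMean n + s * x - c) / σ) ((s / σ) * x)
    have e2 : (derMean n + s * x - c) / σ - (s / σ) * x = (derMean n - c) / σ := by field_simp; ring
    rw [e2, abs_div (derMean n - c), abs_of_pos hσ] at h2
    have h2' : |derMean n - c| / σ ≤ 435 / σ := by gcongr
    have h3 := Phi_scale (s / σ) x (by positivity)
    have h4 : |s / σ - 1| ≤ 500000 / σ := by
      have e3 : s / σ - 1 = (s - σ) / σ := by field_simp
      rw [e3, abs_div, abs_of_pos hσ]
      gcongr
      rw [← hs2] at v1
      have e4 : s^2 - σ^2 = (s - σ) * (s + σ) := by ring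
      rw [e4, abs_mul, abs_of_pos (by linarith : 0 < s + σ)] at v1
      have : |s - σ| * σ ≤ 500000 * σ := by nlinarith [abs_nonneg (s - σ)]
      exact le_of_mul_le_mul_right this hσ
    have h1 := abs_le.mp h1
    have h2 := abs_le.mp (h2.trans h2')
    have h3 := abs_le.mp (h3.trans (mul_le_mul_of_nonneg_left h4 (by norm_num)))
    have e5 : 2100000 / σ = 3255 / σ + 435 / σ + 4 * (500000 / σ) + 96310 / σ := by ring
    have e6 : 0 ≤ 96310 / σ := by positivity
    rw [e5, abs_le]
    constructor <;> linarith [h1.1, h1.2, h2.1, h2.2, h3.1, h3.2]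

/-- Rate of convergence `O(n^{-1/3})` for the number of descents in random derangements. -/
theorem descents_derangements_clt_rate :
    ∃ C : ℝ, 0 < C ∧ ∀ n : ℕ, 4 ≤ n → ∀ x : ℝ,
      |derCDF n x - stdNormalCDF x| ≤ C / (n : ℝ) ^ ((1 : ℝ) / 3) := by
  refine ⟨10500000, by norm_num, fun n hn x => ?_⟩
  obtain ⟨σ, hσ, hlow, h⟩ := final_sigma n hn
  have hn' : (1:ℝ) ≤ n := by exact_mod_cast (by omega : 1 ≤ n)
  refine (h x).trans ?_
  have hp : (0:ℝ) < (n:ℝ) ^ ((1:ℝ)/3) := by positivity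
  rw [div_le_div_iff₀ hσ hp]
  have h1 : (n:ℝ) ^ ((1:ℝ)/3) ≤ Real.sqrt n := by
    rw [Real.sqrt_eq_rpow]
    exact Real.rpow_le_rpow_of_exponent_le hn' (by norm_num)
  have h2 : Real.sqrt n ≤ 5 * σ := by
    rw [Real.sqrt_le_left (by positivity)]; nlinarith
  linarith
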